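/- Liouville redefinition of Hamiltonian triples: In the abstract variational bicomplex with contraction satisfying 2ι∘d_V∘ι = d_V∘ι∘ι + ι∘ι∘d_V, let ω ∈ ⊕_q Ω^{2,q} and let (L, θ) be a Hamiltonian triple for ω (d_V θ = ω and ι ω = d_V L + d_H θ). For any η ∈ ⊕_q Ω^{1,q}, define ℒ := ι∘d_V − d_V∘ι, ω̃ := ω + (d_H − ℒ) d_V η, θ̃ := θ − d_H η + ι d_V η, and L̃ := L + (1/2) ι ι d_V η. Then (L̃, θ̃) is a Hamiltonian triple for ω̃, i.e. d_V θ̃ = ω̃ and ι ω̃ = d_V L̃ + d_H θ̃. -/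

import Mathlib

/-!
Hamiltonian triples for fixed `d_V`, `d_H` and `ι` are closed under addition, so it suffices that
`½ ι ι d_V η` and `ι d_V η - d_H η` complete `(d_H - ℒ) d_V η` to a Hamiltonian triple. Since
`d_V² = 0`, we have `ℒ d_V η = -d_V ι d_V η`, and the relation `2 ι d_V ι = d_V ι ι + ι ι d_V`
applied to `d_V η` exhibits `ι d_V ι d_V η` as `d_V` of `½ ι ι d_V η`.
-/

section HamiltonianTriple

variable {R M : Type*} [Semiring R]

/-- `L` and `θ` complete `ω` to a Hamiltonian triple, the operators `dV`, `dH` and `ι` playing the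
roles of the vertical differential, the horizontal differential and the contraction with a
cohomological vector field. Only the two equations are recorded, not the bidegrees. -/
structure IsHamiltonianTriple [AddCommMonoid M] [Module R M] (dV dH ι : Module.End R M)
    (ω L θ : M) : Prop where
  vertical_eq : dV θ = ω
  contraction_eq : ι ω = dV L + dH θ

theorem IsHamiltonianTriple.add [AddCommMonoid M] [Module R M] {dV dH ι : Module.End R M}
    {ω₁ ω₂ L₁ L₂ θ₁ θ₂ : M} (h₁ : IsHamiltonianTriple dV dH ι ω₁ L₁ θ₁)
    (h₂ : IsHamiltonianTriple dV dH ι ω₂ L₂ θ₂) :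
    IsHamiltonianTriple dV dH ι (ω₁ + ω₂) (L₁ + L₂) (θ₁ + θ₂) where
  vertical_eq := by rw [map_add, h₁.vertical_eq, h₂.vertical_eq]
  contraction_eq := by
    rw [map_add, map_add, map_add, h₁.contraction_eq, h₂.contraction_eq, add_add_add_comm]

theorem contraction_differential_contraction_differential_eq [Invertible (2 : R)] [AddCommMonoid M]
    [Module R M] {d ι : Module.End R M} (hd : d * d = 0)
    (hQQ : 2 • (ι * d * ι) = d * ι * ι + ι * ι * d) (x : M) :
    ι (d (ι (d x))) = d ((⅟2 : R) • ι (ι (d x))) := by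
  have hdd : d (d x) = 0 := LinearMap.congr_fun hd x
  have htwo : (2 : R) • ι (d (ι (d x))) = d (ι (ι (d x))) :=
    calc (2 : R) • ι (d (ι (d x))) = 2 • ι (d (ι (d x))) := ofNat_smul_eq_nsmul R 2 _
      _ = d (ι (ι (d x))) + ι (ι (d (d x))) := LinearMap.congr_fun hQQ (d x)
      _ = d (ι (ι (d x))) := by rw [hdd, map_zero, map_zero, add_zero]
  rw [map_smul, ← htwo, invOf_smul_smul]

variable [AddCommGroup M] [Module R M]

theorem lie_contraction_differential_apply {d : Module.End R M} (hd : d * d = 0)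
    (ι : Module.End R M) (x : M) : ⁅ι, d⁆ (d x) = -d (ι (d x)) := by
  have hdd : d (d x) = 0 := LinearMap.congr_fun hd x
  rw [Ring.lie_def, LinearMap.sub_apply, Module.End.mul_apply, Module.End.mul_apply, hdd, map_zero,
    zero_sub]

theorem isHamiltonianTriple_liouville [Invertible (2 : R)] {dV dH ι : Module.End R M}
    (hdV2 : dV * dV = 0) (hdH2 : dH * dH = 0) (hdVdH : dV * dH + dH * dV = 0)
    (hιdH : ι * dH = dH * ι) (hQQ : 2 • (ι * dV * ι) = dV * ι * ι + ι * ι * dV) (η : M) :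
    IsHamiltonianTriple dV dH ι (dH (dV η) - ⁅ι, dV⁆ (dV η)) ((⅟2 : R) • ι (ι (dV η)))
      (ι (dV η) - dH η) := by
  have hlie : ⁅ι, dV⁆ (dV η) = -dV (ι (dV η)) := lie_contraction_differential_apply hdV2 ι η
  constructor
  · have hanti : dV (dH η) = -dH (dV η) :=
      eq_neg_of_add_eq_zero_left (LinearMap.congr_fun hdVdH η)
    rw [map_sub, hanti, hlie, sub_neg_eq_add, sub_neg_eq_add, add_comm]
  · have hdHdH : dH (dH η) = 0 := LinearMap.congr_fun hdH2 η
    have hcomm : ι (dH (dV η)) = dH (ι (dV η)) := LinearMap.congr_fun hιdH (dV η)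
    calc ι (dH (dV η) - ⁅ι, dV⁆ (dV η))
        = dH (ι (dV η)) + ι (dV (ι (dV η))) := by
          rw [hlie, sub_neg_eq_add, map_add, hcomm]
      _ = dV ((⅟2 : R) • ι (ι (dV η))) + dH (ι (dV η)) := by
          rw [contraction_differential_contraction_differential_eq hdV2 hQQ, add_comm]
      _ = dV ((⅟2 : R) • ι (ι (dV η))) + dH (ι (dV η) - dH η) := by
          rw [map_sub, hdHdH, sub_zero]

theorem liouville_redefinition_of_hamiltonian_triples_general [Invertible (2 : R)]
    {dV dH ι : Module.End R M} (hdV2 : dV * dV = 0) (hdH2 : dH * dH = 0)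
    (hdVdH : dV * dH + dH * dV = 0) (hιdH : ι * dH = dH * ι)
    (hQQ : 2 • (ι * dV * ι) = dV * ι * ι + ι * ι * dV) {ω L θ : M}
    (htriple : IsHamiltonianTriple dV dH ι ω L θ) (η : M) :
    IsHamiltonianTriple dV dH ι (ω + (dH (dV η) - ⁅ι, dV⁆ (dV η)))
      (L + (⅟2 : R) • ι (ι (dV η))) (θ - dH η + ι (dV η)) := by
  rw [sub_add_eq_add_sub, add_sub_assoc]
  exact htriple.add (isHamiltonianTriple_liouville hdV2 hdH2 hdVdH hιdH hQQ η)

end HamiltonianTriple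

/-- **Liouville redefinition of Hamiltonian triples**: if `(L, θ)` is a Hamiltonian triple
for `ω`, then for any `η ∈ ⊕_q Ω^{1,q}`, setting `ω̃ := ω + (d_H − ℒ) d_V η`,
`θ̃ := θ − d_H η + ι d_V η` and `L̃ := L + (1/2) ι ι d_V η`, the pair `(L̃, θ̃)` is a
Hamiltonian triple for `ω̃`. -/
theorem liouville_redefinition_of_hamiltonian_triples
    {R M : Type*} [CommRing R] [Invertible (2 : R)] [AddCommGroup M] [Module R M]
    -- the abstract variational bicomplex
    (n : ℤ) (Ω : ℤ → ℤ → Submodule R M)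
    (hint : DirectSum.IsInternal fun pq : ℤ × ℤ => Ω pq.1 pq.2)
    (hvan : ∀ p q : ℤ, (p < 0 ∨ q < 0 ∨ n < q) → Ω p q = ⊥)
    (dV dH : Module.End R M)
    (hdVdeg : ∀ p q : ℤ, ∀ x ∈ Ω p q, dV x ∈ Ω (p + 1) q)
    (hdHdeg : ∀ p q : ℤ, ∀ x ∈ Ω p q, dH x ∈ Ω p (q + 1))
    (hdV2 : dV * dV = 0) (hdH2 : dH * dH = 0)
    (hdVdH : dV * dH + dH * dV = 0)
    -- the contraction operator ι
    (ι : Module.End R M)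
    (hιdeg : ∀ p q : ℤ, ∀ x ∈ Ω p q, ι x ∈ Ω (p - 1) q)
    (hιdH : ι * dH = dH * ι)
    (hQQ : 2 • (ι * dV * ι) = dV * ι * ι + ι * ι * dV)
    -- ω and the Hamiltonian triple (L, θ)
    (ω L θ : M)
    (hω : ω ∈ ⨆ q : ℤ, Ω 2 q) (hL : L ∈ ⨆ q : ℤ, Ω 0 q) (hθ : θ ∈ ⨆ q : ℤ, Ω 1 q)
    (htriple₁ : dV θ = ω) (htriple₂ : ι ω = dV L + dH θ)
    -- η
    (η : M) (hη : η ∈ ⨆ q : ℤ, Ω 1 q) :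
    (let lie : Module.End R M := ι * dV - dV * ι
     let ω' : M := ω + (dH (dV η) - lie (dV η))
     let θ' : M := θ - dH η + ι (dV η)
     let L' : M := L + (⅟2 : R) • ι (ι (dV η))
     dV θ' = ω' ∧ ι ω' = dV L' + dH θ') := by
  obtain ⟨hV, hι⟩ := liouville_redefinition_of_hamiltonian_triples_general hdV2 hdH2 hdVdH hιdH hQQ
    ⟨htriple₁, htriple₂⟩ η
  exact ⟨hV, hι⟩
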